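/- Let F be any field and A, B ∈ M_n(F) two semisimple matrices with equal characteristic polynomials. Then A and B are conjugate in GL_n(F): there exists g ∈ GL_n(F) with B = gAg⁻¹. -/

import Mathlib

/-- A square matrix over a field is semisimple if the linear endomorphism it induces is
semisimple. -/
def Matrix.IsSemisimple {F : Type*} [Field F] {m : Type*} [Fintype m] [DecidableEq m]
    (g : Matrix m m F) : Prop :=
  Module.End.IsSemisimple (Matrix.toLin' g)

/-! An irreducible factor `p` of the common characteristic polynomial has a root in `F[X]/(p)`, so
by spectral mapping `p` kills a nonzero vector of each space; hence both spaces, viewed as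
`F[X]`-modules, contain a copy of the simple module `F[X]/(p)`. By semisimplicity these copies split
off, and cancelling their characteristic polynomials allows an induction on the dimension. -/

open Polynomial Module

section SpectralMapping

variable {F L V : Type*} [Field F] [Field L] [Algebra F L] [AddCommGroup V] [Module F V]
  [FiniteDimensional F V] {f : End F V} {α : L}

theorem aeval_charpoly_eq_zero_iff_mem_spectrum_baseChange :
    aeval α f.charpoly = 0 ↔ α ∈ spectrum L (f.baseChange L) := by
  rw [End.mem_spectrum_iff_isRoot_charpoly, LinearMap.charpoly_baseChange, IsRoot.def,
    eval_map_algebraMap]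

theorem aeval_charpoly_aeval_eq_zero (hα : aeval α f.charpoly = 0) (p : F[X]) :
    aeval (aeval α p) (aeval f p).charpoly = 0 := by
  rw [aeval_charpoly_eq_zero_iff_mem_spectrum_baseChange] at hα ⊢
  have aeval_baseChange : aeval (f.baseChange L) p = (aeval f p).baseChange L :=
    aeval_algHom_apply (End.baseChangeHom F L V) f p
  have mem_spectrum : eval α (p.map (algebraMap F L)) ∈
      spectrum L (aeval (f.baseChange L) (p.map (algebraMap F L))) :=
    spectrum.subset_polynomial_aeval _ _ ⟨α, hα, rfl⟩
  rwa [eval_map_algebraMap, aeval_map_algebraMap, aeval_baseChange] at mem_spectrum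

theorem exists_ne_zero_aeval_apply_eq_zero (hα : aeval α f.charpoly = 0) {p : F[X]}
    (hp : aeval α p = 0) : ∃ v : V, v ≠ 0 ∧ aeval f p v = 0 := by
  have isRoot_zero : (aeval f p).charpoly.IsRoot 0 := by
    have h := aeval_charpoly_aeval_eq_zero hα p
    rw [hp, ← map_zero (algebraMap F L), aeval_algebraMap_apply] at h
    exact (algebraMap F L).injective (by simpa using h)
  have hasEigenvalue_zero := (End.hasEigenvalue_iff_isRoot_charpoly _ _).2 isRoot_zero
  obtain ⟨v, hv⟩ := hasEigenvalue_zero.exists_hasEigenvector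
  exact ⟨v, hv.2, by rw [hv.apply_eq_smul, zero_smul]⟩

end SpectralMapping

theorem nonempty_quotient_linearEquiv_span_singleton {R M : Type*} [Ring R] [AddCommGroup M]
    [Module R M] {P : Ideal R} (hP : P.IsMaximal) {v : M} (hv : v ≠ 0)
    (hPv : P ≤ Ideal.torsionOf R M v) : Nonempty ((R ⧸ P) ≃ₗ[R] Submodule.span R {v}) := by
  have torsionOf_eq : P = Ideal.torsionOf R M v :=
    hP.eq_of_le (by rwa [Ne, Ideal.torsionOf_eq_top_iff]) hPv
  exact ⟨Submodule.quotEquivOfEq _ _ torsionOf_eq ≪≫ₗ Ideal.quotTorsionOfEquivSpanSingleton R M v⟩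

section ActionCharpoly

/-- The characteristic polynomial of an element `a` of an `R`-algebra acting on a module `M` over
that algebra. For the algebra `R[X]` and `a = X` it is the characteristic polynomial of the
endomorphism of which `M` is the associated `R[X]`-module. -/
noncomputable abbrev actionCharpoly (R M : Type*) {A : Type*} [CommRing R] [Ring A] [Algebra R A]
    [AddCommGroup M] [Module R M] [Module A M] [IsScalarTower R A M] [Module.Free R M]
    [Module.Finite R M] (a : A) : R[X] :=
  (Algebra.lsmul R R M a).charpoly

variable {R A M N : Type*} [CommRing R] [Ring A] [Algebra R A]
  [AddCommGroup M] [Module R M] [Module A M] [IsScalarTower R A M]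
  [Module.Free R M] [Module.Finite R M]
  [AddCommGroup N] [Module R N] [Module A N] [IsScalarTower R A N]
  [Module.Free R N] [Module.Finite R N]

theorem charpoly_eq_actionCharpoly_of_linearEquiv {V : Type*} [AddCommGroup V] [Module R V]
    [Module.Free R V] [Module.Finite R V] {f : End R V} {a : A} (e : V ≃ₗ[R] M)
    (he : ∀ v, e (f v) = a • e v) : f.charpoly = actionCharpoly R M a := by
  have conj_eq_lsmul : e.conj f = Algebra.lsmul R R M a := by
    ext x
    simp [LinearEquiv.conj_apply, he]
  rw [actionCharpoly, ← conj_eq_lsmul, LinearEquiv.charpoly_conj]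

theorem actionCharpoly_X_AEval' (f : End R M)
    [Module.Free R (AEval' f)] [Module.Finite R (AEval' f)] :
    actionCharpoly R (AEval' f) (X : R[X]) = f.charpoly :=
  (charpoly_eq_actionCharpoly_of_linearEquiv (AEval'.of f) fun v ↦
    (AEval'.X_smul_of f v).symm).symm

theorem actionCharpoly_congr (e : M ≃ₗ[A] N) (a : A) :
    actionCharpoly R M a = actionCharpoly R N a :=
  charpoly_eq_actionCharpoly_of_linearEquiv (e.restrictScalars R) fun x ↦ e.map_smul a x

theorem natDegree_actionCharpoly [Nontrivial R] (a : A) :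
    (actionCharpoly R M a).natDegree = finrank R M :=
  LinearMap.charpoly_natDegree _

theorem actionCharpoly_prod (a : A) :
    actionCharpoly R (M × N) a = actionCharpoly R M a * actionCharpoly R N a := by
  have lsmul_prod : Algebra.lsmul R R (M × N) a =
      (Algebra.lsmul R R M a).prodMap (Algebra.lsmul R R N a) := rfl
  rw [actionCharpoly, lsmul_prod, LinearMap.charpoly_prodMap]

theorem actionCharpoly_eq_mul_of_isCompl {S T : Submodule A M} [Module.Free R S]
    [Module.Finite R S] [Module.Free R T] [Module.Finite R T] (h : IsCompl S T) (a : A) :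
    actionCharpoly R M a = actionCharpoly R S a * actionCharpoly R T a := by
  rw [← actionCharpoly_congr (S.prodEquivOfIsCompl T h), actionCharpoly_prod]

theorem actionCharpoly_eq_of_isCompl_of_linearEquiv {S S' : Submodule A M} {T T' : Submodule A N}
    [Module.Free R S] [Module.Finite R S] [Module.Free R S'] [Module.Finite R S']
    [Module.Free R T] [Module.Finite R T] [Module.Free R T'] [Module.Finite R T']
    (hS : IsCompl S S') (hT : IsCompl T T') (e : S ≃ₗ[A] T) {a : A}
    (h : actionCharpoly R M a = actionCharpoly R N a) :
    actionCharpoly R S' a = actionCharpoly R T' a := by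
  rw [actionCharpoly_eq_mul_of_isCompl hS, actionCharpoly_eq_mul_of_isCompl hT,
    actionCharpoly_congr e] at h
  exact (LinearMap.charpoly_monic _).isRegular.left h

end ActionCharpoly

instance finite_submodule_of_isScalarTower {R A M : Type*} [Ring R] [IsNoetherianRing R]
    [Semiring A] [SMul R A] [AddCommGroup M] [Module R M] [Module A M] [IsScalarTower R A M]
    [Module.Finite R M] (S : Submodule A M) : Module.Finite R S :=
  inferInstanceAs (Module.Finite R (S.restrictScalars R))

theorem finrank_lt_of_isCompl {K A M : Type*} [DivisionRing K] [Semiring A] [SMul K A]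
    [AddCommGroup M] [Module K M] [Module A M] [IsScalarTower K A M] [Module.Finite K M]
    {S T : Submodule A M} [Nontrivial S] (h : IsCompl S T) : finrank K T < finrank K M := by
  have T_ne_top : T ≠ ⊤ := by
    rintro rfl
    exact Submodule.nontrivial_iff_ne_bot.1 inferInstance (disjoint_top.1 h.disjoint)
  exact Submodule.finrank_lt (s := T.restrictScalars K)
    (by rwa [Ne, Submodule.restrictScalars_eq_top_iff])

section SemisimplePolynomialModule

variable {F M : Type*} [Field F] [AddCommGroup M] [Module F M] [Module F[X] M]
  [IsScalarTower F F[X] M] [Module.Finite F M]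

theorem exists_ne_zero_smul_eq_zero_of_dvd_actionCharpoly_X {p : F[X]} (hp : Irreducible p)
    (hdvd : p ∣ actionCharpoly F M (X : F[X])) : ∃ v : M, v ≠ 0 ∧ p • v = 0 := by
  have : Fact (Irreducible p) := ⟨hp⟩
  have aeval_root : aeval (AdjoinRoot.root p) p = 0 := by
    rw [AdjoinRoot.aeval_eq, AdjoinRoot.mk_self]
  have charpoly_root := aeval_eq_zero_of_dvd_aeval_eq_zero hdvd aeval_root
  have h := exists_ne_zero_aeval_apply_eq_zero charpoly_root aeval_root
  rwa [aeval_algHom_apply, aeval_X_left_apply] at h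

theorem exists_isCompl_quotient_linearEquiv_of_dvd_actionCharpoly_X [IsSemisimpleModule F[X] M]
    {p : F[X]} (hp : Irreducible p) (hdvd : p ∣ actionCharpoly F M (X : F[X])) :
    ∃ S T : Submodule F[X] M, IsCompl S T ∧ Nonempty ((F[X] ⧸ Ideal.span {p}) ≃ₗ[F[X]] S) := by
  obtain ⟨v, hv, hpv⟩ := exists_ne_zero_smul_eq_zero_of_dvd_actionCharpoly_X hp hdvd
  obtain ⟨T, hT⟩ := exists_isCompl (Submodule.span F[X] {v})
  exact ⟨_, T, hT, nonempty_quotient_linearEquiv_span_singleton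
    (PrincipalIdealRing.isMaximal_of_irreducible hp) hv (by simpa using hpv)⟩

theorem nonempty_linearEquiv_of_actionCharpoly_X_eq {N : Type*} [AddCommGroup N] [Module F N]
    [Module F[X] N] [IsScalarTower F F[X] N] [Module.Finite F N] [IsSemisimpleModule F[X] M]
    [IsSemisimpleModule F[X] N]
    (h : actionCharpoly F M (X : F[X]) = actionCharpoly F N (X : F[X])) :
    Nonempty (M ≃ₗ[F[X]] N) := by
  induction hn : finrank F M using Nat.strong_induction_on generalizing M N with
  | _ n ih =>
  subst hn
  have finrank_eq : finrank F M = finrank F N := by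
    rw [← natDegree_actionCharpoly (X : F[X]), h, natDegree_actionCharpoly]
  rcases (finrank F M).eq_zero_or_pos with hM | hM
  · have : Subsingleton M := finrank_zero_iff.1 hM
    have : Subsingleton N := finrank_zero_iff.1 (finrank_eq ▸ hM)
    exact ⟨0⟩
  obtain ⟨p, hp, hdvd⟩ := exists_irreducible_of_natDegree_pos
    (f := actionCharpoly F M (X : F[X])) (by rwa [natDegree_actionCharpoly])
  obtain ⟨S, S', hS, ⟨eS⟩⟩ := exists_isCompl_quotient_linearEquiv_of_dvd_actionCharpoly_X hp hdvd
  obtain ⟨T, T', hT, ⟨eT⟩⟩ :=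
    exists_isCompl_quotient_linearEquiv_of_dvd_actionCharpoly_X hp (h ▸ hdvd)
  have finrank_lt : finrank F S' < finrank F M := by
    have : Nontrivial (F[X] ⧸ Ideal.span {p}) :=
      Ideal.Quotient.nontrivial_iff.2 (PrincipalIdealRing.isMaximal_of_irreducible hp).ne_top
    have : Nontrivial S := eS.symm.toEquiv.nontrivial
    exact finrank_lt_of_isCompl hS
  have e : S ≃ₗ[F[X]] T := eS.symm ≪≫ₗ eT
  obtain ⟨e'⟩ := ih _ finrank_lt
    (actionCharpoly_eq_of_isCompl_of_linearEquiv hS hT e h) rfl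
  exact ⟨(S.prodEquivOfIsCompl S' hS).symm ≪≫ₗ e.prodCongr e' ≪≫ₗ
    T.prodEquivOfIsCompl T' hT⟩

end SemisimplePolynomialModule

theorem stmt_18_general {F V W : Type*} [Field F] [AddCommGroup V] [Module F V]
    [FiniteDimensional F V] [AddCommGroup W] [Module F W] [FiniteDimensional F W]
    {f : End F V} {g : End F W} (hf : f.IsSemisimple) (hg : g.IsSemisimple)
    (h : f.charpoly = g.charpoly) : ∃ e : V ≃ₗ[F] W, g = e.conj f := by
  have : IsSemisimpleModule F[X] (AEval' f) := hf
  have : IsSemisimpleModule F[X] (AEval' g) := hg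
  have : Module.Finite F (AEval' f) := .equiv (AEval'.of f)
  have : Module.Finite F (AEval' g) := .equiv (AEval'.of g)
  have charpoly_eq : actionCharpoly F (AEval' f) (X : F[X]) =
      actionCharpoly F (AEval' g) (X : F[X]) := by
    rw [actionCharpoly_X_AEval', actionCharpoly_X_AEval', h]
  obtain ⟨e⟩ := nonempty_linearEquiv_of_actionCharpoly_X_eq charpoly_eq
  refine ⟨AEval'.of f ≪≫ₗ e.restrictScalars F ≪≫ₗ (AEval'.of g).symm, LinearMap.ext fun w ↦ ?_⟩
  simp [LinearEquiv.conj_apply, ← AEval'.X_smul_of]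

theorem exists_GL_conj_of_toLin'_eq_conj {R m : Type*} [CommRing R] [Fintype m] [DecidableEq m]
    {A B : Matrix m m R} {e : (m → R) ≃ₗ[R] (m → R)} (h : B.toLin' = e.conj A.toLin') :
    ∃ g : GL m R, B = (g : Matrix m m R) * A * ((g⁻¹ : GL m R) : Matrix m m R) := by
  obtain ⟨g, hg⟩ := Matrix.GeneralLinearGroup.toLin.surjective
    (LinearMap.GeneralLinearGroup.ofLinearEquiv e)
  have toLin'_g : Matrix.toLin' (g : Matrix m m R) = e := congrArg Units.val hg
  have toLin'_g_inv : Matrix.toLin' ((g⁻¹ : GL m R) : Matrix m m R) = e.symm :=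
    congrArg Units.inv hg
  refine ⟨g, Matrix.toLin'.injective ?_⟩
  rw [h, Matrix.toLin'_mul, Matrix.toLin'_mul, toLin'_g, toLin'_g_inv, LinearEquiv.conj_apply]

/-- Two semisimple matrices over a field with equal characteristic polynomials are
conjugate under `GL_n(F)`. -/
theorem stmt_18 {F : Type*} [Field F] {n : ℕ} (A B : Matrix (Fin n) (Fin n) F)
    (hA : A.IsSemisimple) (hB : B.IsSemisimple) (h : A.charpoly = B.charpoly) :
    ∃ g : GL (Fin n) F, B = (g : Matrix (Fin n) (Fin n) F) * A *
      ((g⁻¹ : GL (Fin n) F) : Matrix (Fin n) (Fin n) F) := by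
  obtain ⟨e, he⟩ := stmt_18_general hA hB (by simpa only [Matrix.charpoly_toLin'] using h)
  exact exists_GL_conj_of_toLin'_eq_conj he
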